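/- For every tempered distribution T ∈ S′(ℝ^d) and every φ in the Schwartz space S(ℝ^d), the family (T(h_β) · ∫_{ℝ^d} φ(x) h_β(x) dx)_{β∈ℕ^d} is absolutely summable and its sum equals T(φ); that is, T(φ) = Σ_{β∈ℕ^d} T(h_β) ∫_{ℝ^d} φ(x) h_β(x) dx. -/

import Mathlib

open MeasureTheory

noncomputable def hermitePoly (n : ℕ) (x : ℝ) : ℝ :=
  (-1 : ℝ) ^ n * Real.exp (x ^ 2 / 2) *
    iteratedDeriv n (fun y : ℝ => Real.exp (-(y ^ 2 / 2))) x

noncomputable def hermiteFun (n : ℕ) (x : ℝ) : ℝ :=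
  (Real.sqrt (Real.sqrt (2 * Real.pi) * n.factorial))⁻¹ *
    Real.exp (-(x ^ 2 / 4)) * hermitePoly n x

noncomputable def hermiteFunMulti (d : ℕ) (α : Fin d → ℕ) (x : EuclideanSpace ℝ (Fin d)) : ℝ :=
  ∏ i, hermiteFun (α i) (x i)

noncomputable def hermCoeff (d : ℕ) (f : EuclideanSpace ℝ (Fin d) → ℝ) (β : Fin d → ℕ) : ℝ :=
  ∫ x, f x * hermiteFunMulti d β x


section OneDim
open Polynomial

lemma hermitePoly_eq (n : ℕ) (x : ℝ) : hermitePoly n x = aeval x (hermite n) := by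
  unfold hermitePoly
  rw [iteratedDeriv_eq_iterate, hermite_eq_deriv_gaussian']
  ring

lemma derivative_hermite_succ (n : ℕ) :
    derivative (hermite (n + 1)) = ((n : ℤ[X]) + 1) * hermite n := by
  induction n with
  | zero => simp [hermite_succ, hermite_zero]
  | succ n ih =>
    rw [hermite_succ (n + 1), derivative_sub, derivative_mul, derivative_X, ih]
    have h1 : derivative (((n : ℤ[X]) + 1) * hermite n) = ((n : ℤ[X]) + 1) * derivative (hermite n) := by
      rw [derivative_mul]; simp
    rw [h1]
    have h2 : derivative (hermite n) = X * hermite n - hermite (n + 1) := by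
      rw [hermite_succ]; ring
    rw [h2]; push_cast; ring

lemma hermitePoly_hasDerivAt (n : ℕ) (x : ℝ) :
    HasDerivAt (hermitePoly n) (x * hermitePoly n x - hermitePoly (n + 1) x) x := by
  have h : hermitePoly n = fun x => aeval x (hermite n) := by
    funext y; exact hermitePoly_eq n y
  have h2 := (hermite n).hasDerivAt_aeval x
  rw [h]
  refine h2.congr_deriv ?_
  simp only [hermitePoly_eq, hermite_succ]
  simp

lemma hermitePoly_rec (n : ℕ) (x : ℝ) :
    x * hermitePoly n x = hermitePoly (n + 1) x + n * hermitePoly (n - 1) x := by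
  simp only [hermitePoly_eq]
  cases n with
  | zero => simp [hermite_succ, hermite_zero]
  | succ n =>
    rw [hermite_succ (n + 1), derivative_hermite_succ]
    simp

/-- the normalisation constant -/
noncomputable def hcst (n : ℕ) : ℝ := (Real.sqrt (Real.sqrt (2 * Real.pi) * n.factorial))⁻¹

lemma hcst_succ (n : ℕ) : hcst n = Real.sqrt (n + 1) * hcst (n + 1) := by
  unfold hcst
  rw [Nat.factorial_succ]
  push_cast
  rw [show Real.sqrt (2 * Real.pi) * (((n : ℝ) + 1) * n.factorial)
    = ((n : ℝ) + 1) * (Real.sqrt (2 * Real.pi) * n.factorial) by ring,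
    Real.sqrt_mul (by positivity : (0 : ℝ) ≤ (n : ℝ) + 1)]
  have : Real.sqrt ((n : ℝ) + 1) ≠ 0 := by positivity
  field_simp

lemma hermiteFun_eq (n : ℕ) (x : ℝ) :
    hermiteFun n x = hcst n * Real.exp (-(x ^ 2 / 4)) * hermitePoly n x := rfl

lemma hermiteFun_rec (n : ℕ) (x : ℝ) :
    x * hermiteFun n x = Real.sqrt (n + 1) * hermiteFun (n + 1) x
      + Real.sqrt n * hermiteFun (n - 1) x := by
  simp only [hermiteFun_eq]
  have h := hermitePoly_rec n x
  have h0 := hcst_succ n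
  cases n with
  | zero =>
    simp at h h0 ⊢
    rw [← h0, ← h]; ring
  | succ n =>
    have h1 := hcst_succ n
    have h2 : Real.sqrt ((n : ℝ) + 1) * Real.sqrt ((n : ℝ) + 1) = n + 1 :=
      Real.mul_self_sqrt (by positivity)
    simp only [Nat.add_sub_cancel] at h ⊢
    push_cast at h h0 ⊢
    rw [h1]
    linear_combination (hcst (n + 1) * Real.exp (-(x ^ 2 / 4))) * h +
      Real.exp (-(x ^ 2 / 4)) * hermitePoly (n + 1 + 1) x * h0 -
       Real.exp (-(x ^ 2 / 4)) * hermitePoly n x * hcst (n + 1) * h2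

lemma hermiteFun_hasDerivAt (n : ℕ) (x : ℝ) :
    HasDerivAt (hermiteFun n) (x / 2 * hermiteFun n x
      - Real.sqrt (n + 1) * hermiteFun (n + 1) x) x := by
  have h1 : HasDerivAt (fun x : ℝ => Real.exp (-(x ^ 2 / 4)))
      (Real.exp (-(x ^ 2 / 4)) * (-(x / 2))) x := by
    apply HasDerivAt.exp
    refine (((hasDerivAt_id x).pow 2).div_const 4).neg.congr_deriv ?_
    simp; ring
  have h2 := (h1.const_mul (hcst n)).mul (hermitePoly_hasDerivAt n x)
  have h3 : hermiteFun n = fun x => hcst n * Real.exp (-(x ^ 2 / 4)) * hermitePoly n x := rfl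
  rw [h3]
  refine h2.congr_deriv ?_
  simp only [hermiteFun_eq]
  rw [hcst_succ n]
  ring

lemma hermiteFun_hasDerivAt' (n : ℕ) (x : ℝ) :
    HasDerivAt (hermiteFun n) (1 / 2 * (Real.sqrt n * hermiteFun (n - 1) x
      - Real.sqrt (n + 1) * hermiteFun (n + 1) x)) x := by
  refine (hermiteFun_hasDerivAt n x).congr_deriv ?_
  have := hermiteFun_rec n x
  linear_combination (1 / 2) * this

lemma hermiteFun_continuous (n : ℕ) : Continuous (hermiteFun n) :=
  continuous_iff_continuousAt.2 fun x => (hermiteFun_hasDerivAt n x).continuousAt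

lemma integrable_poly_gauss (P : ℝ[X]) :
    Integrable (fun x : ℝ => P.eval x * Real.exp (-(1 / 2) * x ^ 2)) := by
  induction P using Polynomial.induction_on' with
  | add p q hp hq => 
    refine (hp.add hq).congr (Filter.Eventually.of_forall fun x => ?_)
    simp [add_mul]
  | monomial n a =>
    have h := integrable_rpow_mul_exp_neg_mul_sq (b := 1 / 2) (by norm_num) (s := (n : ℝ))
      (by have : (0 : ℝ) ≤ n := by positivity
          linarith)
    simp only [Real.rpow_natCast] at h
    have h2 := h.const_mul a
    refine h2.congr (Filter.Eventually.of_forall fun x => ?_)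
    simp only [eval_monomial]; ring

lemma integrable_hermiteFun_mul (n m : ℕ) :
    Integrable (fun x : ℝ => hermiteFun n x * hermiteFun m x) := by
  have h := (integrable_poly_gauss (((hermite n).map (algebraMap ℤ ℝ)) *
    ((hermite m).map (algebraMap ℤ ℝ)))).const_mul (hcst n * hcst m)
  refine h.congr (Filter.Eventually.of_forall fun x => ?_)
  simp only [hermiteFun_eq, hermitePoly_eq, eval_mul, eval_map_algebraMap]
  have : Real.exp (-(1 / 2) * x ^ 2) = Real.exp (-(x ^ 2 / 4)) * Real.exp (-(x ^ 2 / 4)) := by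
    rw [← Real.exp_add]; ring_nf
  rw [this]; ring

lemma integral_hermiteFun_sq (n : ℕ) :
    ∫ x, hermiteFun n x * hermiteFun n x = ∫ x, hermiteFun 0 x * hermiteFun 0 x := by
  induction n with
  | zero => rfl
  | succ n ih =>
    rw [← ih]
    have hd : ∀ x, HasDerivAt (fun x => hermiteFun n x * hermiteFun (n + 1) x)
        (Real.sqrt (n + 1) * (hermiteFun n x * hermiteFun n x
          - hermiteFun (n + 1) x * hermiteFun (n + 1) x)) x := by
      intro x
      refine ((hermiteFun_hasDerivAt n x).mul (hermiteFun_hasDerivAt (n + 1) x)).congr_deriv ?_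
      have := hermiteFun_rec (n + 1) x
      simp only [Nat.add_sub_cancel] at this
      push_cast at this ⊢
      linear_combination (hermiteFun n x) * this
    have := integral_eq_zero_of_hasDerivAt_of_integrable hd
      (((integrable_hermiteFun_mul n n).sub (integrable_hermiteFun_mul (n + 1) (n + 1))).const_mul _)
      (integrable_hermiteFun_mul n (n + 1))
    rw [integral_const_mul, integral_sub (integrable_hermiteFun_mul n n)
      (integrable_hermiteFun_mul (n + 1) (n + 1))] at this
    have h0 : Real.sqrt ((n : ℝ) + 1) ≠ 0 := by positivity
    have := (mul_eq_zero.1 this).resolve_left h0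
    linarith

lemma hermiteFun_bound : ∃ K : ℝ, 0 ≤ K ∧ ∀ (n : ℕ) (x : ℝ), |hermiteFun n x| ≤ K * (n + 1) := by
  set I := ∫ x, hermiteFun 0 x * hermiteFun 0 x with hI
  have hI0 : 0 ≤ I := integral_nonneg fun x => mul_self_nonneg _
  refine ⟨Real.sqrt (2 * I), by positivity, fun n x => ?_⟩
  set g : ℝ → ℝ := fun x => hermiteFun n x * hermiteFun n x + (1 / 2 * (n * (hermiteFun (n - 1) x *
    hermiteFun (n - 1) x) + (n + 1) * (hermiteFun (n + 1) x * hermiteFun (n + 1) x))) with hg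
  have hgi : Integrable g :=
    (integrable_hermiteFun_mul n n).add ((((integrable_hermiteFun_mul (n - 1) (n - 1)).const_mul _).add
      ((integrable_hermiteFun_mul (n + 1) (n + 1)).const_mul _)).const_mul _)
  have hgI : ∫ x, g x = I * (n + 3 / 2) := by
    have i1 := integrable_hermiteFun_mul n n
    have i2 := (integrable_hermiteFun_mul (n - 1) (n - 1)).const_mul (n : ℝ)
    have i3 := (integrable_hermiteFun_mul (n + 1) (n + 1)).const_mul ((n : ℝ) + 1)
    have i4 : Integrable (fun x => 1 / 2 * (n * (hermiteFun (n - 1) x *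
      hermiteFun (n - 1) x) + (n + 1) * (hermiteFun (n + 1) x * hermiteFun (n + 1) x))) :=
      (i2.add i3).const_mul (1 / 2)
    rw [hg, integral_add i1 i4, integral_const_mul, integral_add i2 i3, integral_const_mul,
      integral_const_mul, integral_hermiteFun_sq n, integral_hermiteFun_sq (n - 1),
      integral_hermiteFun_sq (n + 1), ← hI]
    ring
  set u : ℝ → ℝ := fun x => hermiteFun n x * (Real.sqrt n * hermiteFun (n - 1) x
      - Real.sqrt (n + 1) * hermiteFun (n + 1) x) with hu
  have hd : ∀ y, HasDerivAt (fun x => hermiteFun n x * hermiteFun n x) (u y) y := by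
    intro y
    refine ((hermiteFun_hasDerivAt' n y).mul (hermiteFun_hasDerivAt' n y)).congr_deriv ?_
    rw [hu]; ring
  have hui : Integrable u := by
    have := ((integrable_hermiteFun_mul n (n - 1)).const_mul (Real.sqrt n)).sub
      ((integrable_hermiteFun_mul n (n + 1)).const_mul (Real.sqrt (n + 1)))
    refine this.congr (Filter.Eventually.of_forall fun y => ?_)
    simp [hu]; ring
  have hug : ∀ y, u y ≤ g y := by
    intro y
    have h1 : Real.sqrt n * Real.sqrt n = n := Real.mul_self_sqrt (by positivity)
    have h2 : Real.sqrt ((n : ℝ) + 1) * Real.sqrt ((n : ℝ) + 1) = n + 1 :=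
      Real.mul_self_sqrt (by positivity)
    simp only [hu, hg]
    generalize hermiteFun n y = a
    generalize hermiteFun (n - 1) y = b
    generalize hermiteFun (n + 1) y = c
    have e : (n : ℝ) * (b * b) + (n + 1) * (c * c) = (Real.sqrt n * b) ^ 2
      + (Real.sqrt (n + 1) * c) ^ 2 := by
      linear_combination (-(b * b)) * h1 - (c * c) * h2
    rw [e]
    generalize Real.sqrt n * b = s
    generalize Real.sqrt (n + 1) * c = t
    nlinarith [sq_nonneg (a - (s - t) / 2), sq_nonneg (s + t)]
  have hz := tendsto_zero_of_hasDerivAt_of_integrableOn_Iic (a := x) (fun y _ => hd y)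
    hui.integrableOn (integrable_hermiteFun_mul n n).integrableOn
  have hIic := integral_Iic_of_hasDerivAt_of_tendsto' (a := x) (fun y _ => hd y)
    hui.integrableOn hz
  have h1 : ∫ y in Set.Iic x, u y ≤ ∫ y in Set.Iic x, g y :=
    setIntegral_mono hui.integrableOn hgi.integrableOn hug
  have h2 : ∫ y in Set.Iic x, g y ≤ ∫ y, g y := by
    refine setIntegral_le_integral hgi (Filter.Eventually.of_forall fun y => ?_)
    simp only [hg, Pi.zero_apply]
    have := mul_self_nonneg (hermiteFun n y)
    have := mul_self_nonneg (hermiteFun (n - 1) y)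
    have := mul_self_nonneg (hermiteFun (n + 1) y)
    positivity
  have hfin : hermiteFun n x * hermiteFun n x ≤ I * (n + 3 / 2) := by
    rw [← hgI]; linarith
  refine abs_le_of_sq_le_sq' ?_ (by positivity) |> abs_le.2
  rw [mul_pow, Real.sq_sqrt (by positivity)]
  have hn : (0 : ℝ) ≤ n := by positivity
  nlinarith [mul_nonneg hI0 hn, mul_nonneg (mul_nonneg hI0 hn) hn]

end OneDim

section MultiDim
open scoped SchwartzMap LineDeriv
open Function Finset

/-- raise the `i`-th index -/
def hup {d : ℕ} (β : Fin d → ℕ) (i : Fin d) : Fin d → ℕ := update β i (β i + 1)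
/-- lower the `i`-th index -/
def hdn {d : ℕ} (β : Fin d → ℕ) (i : Fin d) : Fin d → ℕ := update β i (β i - 1)

lemma hermiteFunMulti_update {d : ℕ} (β : Fin d → ℕ) (i : Fin d) (n : ℕ)
    (x : EuclideanSpace ℝ (Fin d)) :
    hermiteFunMulti d (update β i n) x =
      hermiteFun n (x i) * ∏ j ∈ univ.erase i, hermiteFun (β j) (x j) := by
  unfold hermiteFunMulti
  rw [← Finset.mul_prod_erase univ _ (mem_univ i)]
  rw [update_self]
  congr 1
  refine Finset.prod_congr rfl fun j hj => ?_
  rw [update_of_ne (Finset.ne_of_mem_erase hj)]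

lemma hermiteFunMulti_split {d : ℕ} (β : Fin d → ℕ) (i : Fin d)
    (x : EuclideanSpace ℝ (Fin d)) :
    hermiteFunMulti d β x =
      hermiteFun (β i) (x i) * ∏ j ∈ univ.erase i, hermiteFun (β j) (x j) := by
  conv_lhs => rw [← update_eq_self i β]
  exact hermiteFunMulti_update β i _ x

lemma hermiteFunMulti_rec {d : ℕ} (β : Fin d → ℕ) (i : Fin d) (x : EuclideanSpace ℝ (Fin d)) :
    x i * hermiteFunMulti d β x = Real.sqrt (β i + 1) * hermiteFunMulti d (hup β i) x
      + Real.sqrt (β i) * hermiteFunMulti d (hdn β i) x := by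
  unfold hup hdn
  rw [hermiteFunMulti_update, hermiteFunMulti_update, hermiteFunMulti_split β i]
  linear_combination (∏ j ∈ univ.erase i, hermiteFun (β j) (x j)) * hermiteFun_rec (β i) (x i)

lemma hermiteFunMulti_lineDeriv {d : ℕ} (β : Fin d → ℕ) (i : Fin d)
    (x : EuclideanSpace ℝ (Fin d)) :
    lineDeriv ℝ (hermiteFunMulti d β) x (EuclideanSpace.single i 1) =
      1 / 2 * (Real.sqrt (β i) * hermiteFunMulti d (hdn β i) x
       - Real.sqrt (β i + 1) * hermiteFunMulti d (hup β i) x) := by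
  apply HasLineDerivAt.lineDeriv
  unfold HasLineDerivAt hup hdn
  rw [hermiteFunMulti_update, hermiteFunMulti_update]
  have e : (fun t : ℝ => hermiteFunMulti d β (x + t • EuclideanSpace.single i 1)) =
      fun t => hermiteFun (β i) (x i + t) * ∏ j ∈ univ.erase i, hermiteFun (β j) (x j) := by
    funext t
    rw [hermiteFunMulti_split β i]
    congr 1
    · simp
    · refine Finset.prod_congr rfl fun j hj => ?_
      have := Finset.ne_of_mem_erase hj
      simp [this]
  rw [e]
  have h1 : HasDerivAt (hermiteFun (β i)) _ (x i + 0) := hermiteFun_hasDerivAt' (β i) (x i + 0)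
  have h2 := (h1.comp_const_add (x i) 0).mul_const (∏ j ∈ univ.erase i, hermiteFun (β j) (x j))
  refine h2.congr_deriv ?_
  rw [add_zero]; ring

/-- multiplication by a coordinate -/
noncomputable def Xop {d : ℕ} (i : Fin d) :
    𝓢(EuclideanSpace ℝ (Fin d), ℝ) →L[ℝ] 𝓢(EuclideanSpace ℝ (Fin d), ℝ) :=
  SchwartzMap.smulLeftCLM ℝ (fun x : EuclideanSpace ℝ (Fin d) => x i)

/-- coordinate derivative -/
noncomputable def Dop {d : ℕ} (i : Fin d) (φ : 𝓢(EuclideanSpace ℝ (Fin d), ℝ)) :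
    𝓢(EuclideanSpace ℝ (Fin d), ℝ) := ∂_{(EuclideanSpace.single i (1 : ℝ))} φ

lemma Xop_apply {d : ℕ} (i : Fin d) (φ : 𝓢(EuclideanSpace ℝ (Fin d), ℝ))
    (x : EuclideanSpace ℝ (Fin d)) : Xop i φ x = x i * φ x := by
  have hg : (fun x : EuclideanSpace ℝ (Fin d) => x i).HasTemperateGrowth :=
    (EuclideanSpace.proj (𝕜 := ℝ) i).hasTemperateGrowth
  unfold Xop
  rw [SchwartzMap.smulLeftCLM_apply_apply hg]; rfl

lemma Dop_apply {d : ℕ} (i : Fin d) (φ : 𝓢(EuclideanSpace ℝ (Fin d), ℝ))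
    (x : EuclideanSpace ℝ (Fin d)) :
    Dop i φ x = lineDeriv ℝ φ x (EuclideanSpace.single i 1) :=
  SchwartzMap.lineDerivOp_apply _ _ _

lemma schwartz_mul_integrable {d : ℕ} (φ ψ : 𝓢(EuclideanSpace ℝ (Fin d), ℝ)) :
    Integrable (fun x => φ x * ψ x) :=
  (SchwartzMap.pairing (ContinuousLinearMap.mul ℝ ℝ) φ ψ).integrable

lemma integral_Dop {d : ℕ} (i : Fin d) (φ ψ : 𝓢(EuclideanSpace ℝ (Fin d), ℝ)) :
    ∫ x, Dop i φ x * ψ x = - ∫ x, φ x * Dop i ψ x := by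
  have := SchwartzMap.integral_mul_lineDerivOp_right_eq_neg_left (μ := volume) φ ψ
    (EuclideanSpace.single i (1 : ℝ))
  unfold Dop
  rw [this]; simp

variable {d : ℕ} (h : (Fin d → ℕ) → 𝓢(EuclideanSpace ℝ (Fin d), ℝ))

/-- coefficient -/
noncomputable def hco (φ : 𝓢(EuclideanSpace ℝ (Fin d), ℝ)) (β : Fin d → ℕ) : ℝ :=
  ∫ x, φ x * h β x

lemma hco_add (φ ψ : 𝓢(EuclideanSpace ℝ (Fin d), ℝ)) (β : Fin d → ℕ) :
    hco h (φ + ψ) β = hco h φ β + hco h ψ β := by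
  unfold hco
  rw [← integral_add (schwartz_mul_integrable _ _) (schwartz_mul_integrable _ _)]
  simp [add_mul]

lemma hco_smul (a : ℝ) (φ : 𝓢(EuclideanSpace ℝ (Fin d), ℝ)) (β : Fin d → ℕ) :
    hco h (a • φ) β = a * hco h φ β := by
  unfold hco
  rw [← integral_const_mul]
  simp [mul_assoc]

lemma hco_sub (φ ψ : 𝓢(EuclideanSpace ℝ (Fin d), ℝ)) (β : Fin d → ℕ) :
    hco h (φ - ψ) β = hco h φ β - hco h ψ β := by
  unfold hco
  rw [← integral_sub (schwartz_mul_integrable _ _) (schwartz_mul_integrable _ _)]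
  simp [sub_mul]

/-- annihilation -/
noncomputable def Am (i : Fin d) (φ : 𝓢(EuclideanSpace ℝ (Fin d), ℝ)) :
    𝓢(EuclideanSpace ℝ (Fin d), ℝ) := (1 / 2 : ℝ) • Xop i φ + Dop i φ
/-- creation -/
noncomputable def Ap (i : Fin d) (φ : 𝓢(EuclideanSpace ℝ (Fin d), ℝ)) :
    𝓢(EuclideanSpace ℝ (Fin d), ℝ) := (1 / 2 : ℝ) • Xop i φ - Dop i φ

variable (hh : ∀ β x, h β x = hermiteFunMulti d β x)

include hh

lemma Xop_h (β : Fin d → ℕ) (i : Fin d) : Xop i (h β) =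
    Real.sqrt (β i + 1) • h (hup β i) + Real.sqrt (β i) • h (hdn β i) := by
  ext x
  simp [Xop_apply, hh, hermiteFunMulti_rec]

lemma Dop_h (β : Fin d → ℕ) (i : Fin d) : Dop i (h β) =
    (1 / 2 : ℝ) • (Real.sqrt (β i) • h (hdn β i) - Real.sqrt (β i + 1) • h (hup β i)) := by
  ext x
  have : (h β : EuclideanSpace ℝ (Fin d) → ℝ) = hermiteFunMulti d β := funext (hh β)
  rw [Dop_apply, this, hermiteFunMulti_lineDeriv]
  simp [hh]

lemma Am_h (β : Fin d → ℕ) (i : Fin d) : Am i (h β) = Real.sqrt (β i) • h (hdn β i) := by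
  unfold Am
  rw [Xop_h h hh, Dop_h h hh]
  module

lemma Ap_h (β : Fin d → ℕ) (i : Fin d) : Ap i (h β) = Real.sqrt (β i + 1) • h (hup β i) := by
  unfold Ap
  rw [Xop_h h hh, Dop_h h hh]
  module

omit hh in
lemma integral_Am (i : Fin d) (φ ψ : 𝓢(EuclideanSpace ℝ (Fin d), ℝ)) :
    ∫ x, Am i φ x * ψ x = ∫ x, φ x * Ap i ψ x := by
  have e1 : ∀ x, Am i φ x * ψ x = (1 / 2) * (Xop i φ x * ψ x) + Dop i φ x * ψ x := by
    intro x; simp [Am]; ring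
  have e2 : ∀ x, φ x * Ap i ψ x = (1 / 2) * (Xop i φ x * ψ x) - φ x * Dop i ψ x := by
    intro x; simp [Ap, Xop_apply]; ring
  simp_rw [e1, e2]
  rw [integral_add ((schwartz_mul_integrable _ _).const_mul _) (schwartz_mul_integrable _ _),
   integral_sub ((schwartz_mul_integrable _ _).const_mul _) (schwartz_mul_integrable _ _),
   integral_Dop]
  ring

omit hh in
lemma integral_Ap (i : Fin d) (φ ψ : 𝓢(EuclideanSpace ℝ (Fin d), ℝ)) :
    ∫ x, Ap i φ x * ψ x = ∫ x, φ x * Am i ψ x := by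
  have := integral_Am i ψ φ
  simp_rw [mul_comm _ (φ _)] at this
  rw [this]
  simp_rw [mul_comm]

lemma hco_Am (φ : 𝓢(EuclideanSpace ℝ (Fin d), ℝ)) (β : Fin d → ℕ) (i : Fin d) :
    hco h (Am i φ) β = Real.sqrt (β i + 1) * hco h φ (hup β i) := by
  unfold hco
  rw [integral_Am, Ap_h h hh, ← integral_const_mul]
  refine integral_congr_ae (Filter.Eventually.of_forall fun x => ?_)
  simp; ring

lemma hco_Ap (φ : 𝓢(EuclideanSpace ℝ (Fin d), ℝ)) (β : Fin d → ℕ) (i : Fin d) :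
    hco h (Ap i φ) β = Real.sqrt (β i) * hco h φ (hdn β i) := by
  unfold hco
  rw [integral_Ap, Am_h h hh, ← integral_const_mul]
  refine integral_congr_ae (Filter.Eventually.of_forall fun x => ?_)
  simp; ring

omit hh in
lemma hdn_hup (β : Fin d → ℕ) (i : Fin d) : hdn (hup β i) i = β := by
  simp [hdn, hup]

omit hh in
lemma hup_self (β : Fin d → ℕ) (i : Fin d) : hup β i i = β i + 1 := by
  simp [hup]

lemma hco_AmAp (φ : 𝓢(EuclideanSpace ℝ (Fin d), ℝ)) (β : Fin d → ℕ) (i : Fin d) :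
    hco h (Am i (Ap i φ)) β = (β i + 1) * hco h φ β := by
  rw [hco_Am h hh, hco_Ap h hh, hdn_hup, hup_self, ← mul_assoc]
  push_cast
  rw [Real.mul_self_sqrt (by positivity)]

lemma AmAp_h (β : Fin d → ℕ) (i : Fin d) : Am i (Ap i (h β)) = ((β i : ℝ) + 1) • h β := by
  have : ∀ (a : ℝ) (φ : 𝓢(EuclideanSpace ℝ (Fin d), ℝ)), Am i (a • φ) = a • Am i φ := by
    intro a φ
    unfold Am Dop
    rw [map_smul, LineDeriv.lineDerivOp_smul]
    module
  rw [Ap_h h hh, this, Am_h h hh, hdn_hup, hup_self, smul_smul]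
  push_cast
  rw [Real.mul_self_sqrt (by positivity)]

/-- orthogonality -/
lemma hco_h_ne (α β : Fin d → ℕ) (hne : α ≠ β) : hco h (h α) β = 0 := by
  obtain ⟨i, hi⟩ := Function.ne_iff.1 hne
  have h1 := hco_AmAp h hh (h α) β i
  rw [AmAp_h h hh, hco_smul] at h1
  have h2 : ((α i : ℝ) - β i) * hco h (h α) β = 0 := by linarith
  refine (mul_eq_zero.1 h2).resolve_left ?_
  refine sub_ne_zero.2 ?_
  exact_mod_cast hi

lemma hco_h_up (β : Fin d → ℕ) (i : Fin d) :
    hco h (h (hup β i)) (hup β i) = hco h (h β) β := by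
  have h1 := hco_Ap h hh (h β) (hup β i) i
  rw [Ap_h h hh, hco_smul, hdn_hup, hup_self] at h1
  push_cast at h1
  have h0 : Real.sqrt ((β i : ℝ) + 1) ≠ 0 := by positivity
  exact mul_left_cancel₀ h0 h1

/-- value of the zeroth function -/
lemma h_zero (x : EuclideanSpace ℝ (Fin d)) :
    h 0 x = hcst 0 ^ d * Real.exp (-(1 / 4) * ‖x‖ ^ 2) := by
  rw [hh, hermiteFunMulti, EuclideanSpace.norm_sq_eq, Finset.mul_sum, Real.exp_sum]
  have : ∀ i : Fin d, hermiteFun ((0 : Fin d → ℕ) i) (x i)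
      = hcst 0 * Real.exp (-(1 / 4) * ‖x i‖ ^ 2) := by
    intro i
    rw [hermiteFun_eq, hermitePoly_eq]
    simp only [Pi.zero_apply, Polynomial.hermite_zero]
    simp
    left; ring
  simp_rw [this, Finset.prod_mul_distrib]
  simp

lemma hco_zero : hco h (h 0) 0 = 1 := by
  unfold hco
  simp_rw [h_zero h hh]
  have e : ∀ x : EuclideanSpace ℝ (Fin d), hcst 0 ^ d * Real.exp (-(1 / 4) * ‖x‖ ^ 2) *
      (hcst 0 ^ d * Real.exp (-(1 / 4) * ‖x‖ ^ 2)) =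
      (hcst 0 ^ 2) ^ d * Real.exp (-(1 / 2) * ‖x‖ ^ 2) := by
    intro x
    have : Real.exp (-(1 / 2) * ‖x‖ ^ 2) = Real.exp (-(1 / 4) * ‖x‖ ^ 2) *
      Real.exp (-(1 / 4) * ‖x‖ ^ 2) := by rw [← Real.exp_add]; ring_nf
    rw [this]; ring
  simp_rw [e]
  rw [integral_const_mul, GaussianFourier.integral_rexp_neg_mul_sq_norm (by norm_num)]
  have h2 : (Real.pi / (1 / 2)) ^ ((Module.finrank ℝ (EuclideanSpace ℝ (Fin d)) : ℝ) / 2)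
      = Real.sqrt (2 * Real.pi) ^ d := by
    rw [Real.sqrt_eq_rpow, ← Real.rpow_natCast, ← Real.rpow_mul (by positivity)]
    simp
    congr 1 <;> ring
  rw [h2, ← mul_pow]
  have : hcst 0 ^ 2 * Real.sqrt (2 * Real.pi) = 1 := by
    unfold hcst
    rw [inv_pow, Real.sq_sqrt (by positivity)]
    simp
    field_simp
  rw [this, one_pow]

lemma hco_h_self (β : Fin d → ℕ) : hco h (h β) β = 1 := by
  induction hn : ∑ i, β i generalizing β with
  | zero =>
    have : β = 0 := by
      funext i
      exact (Finset.sum_eq_zero_iff.1 hn) i (mem_univ i)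
    rw [this]; exact hco_zero h hh
  | succ n ih =>
    have : ∃ i, β i ≠ 0 := by
      by_contra hc
      push Not at hc
      simp [hc] at hn
    obtain ⟨i, hi⟩ := this
    have e : hup (hdn β i) i = β := by
      simp only [hup, hdn, update_self, update_idem]
      rw [Nat.sub_add_cancel (Nat.one_le_iff_ne_zero.2 hi), update_eq_self]
    rw [← e, hco_h_up h hh]
    apply ih
    have e2 := Finset.add_sum_erase univ β (mem_univ i)
    have e3 := Finset.add_sum_erase univ (hdn β i) (mem_univ i)
    have e4 : ∑ j ∈ univ.erase i, hdn β i j = ∑ j ∈ univ.erase i, β j := by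
      refine Finset.sum_congr rfl fun j hj => ?_
      simp [hdn, Finset.ne_of_mem_erase hj]
    rw [← e3, e4]
    simp only [hdn, update_self]
    omega

end MultiDim

section Bounds
open scoped SchwartzMap LineDeriv
open Function Finset

/-- the weight -/
noncomputable def hW {d : ℕ} (β : Fin d → ℕ) : ℝ := ∏ i, ((β i : ℝ) + 1)

lemma hW_ge_one {d : ℕ} (β : Fin d → ℕ) : 1 ≤ hW β := by
  unfold hW
  exact Finset.one_le_prod fun i => by simp

lemma hW_pos {d : ℕ} (β : Fin d → ℕ) : 0 < hW β := lt_of_lt_of_le one_pos (hW_ge_one β)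

lemma hW_update {d : ℕ} (β : Fin d → ℕ) (i : Fin d) (n : ℕ) :
    hW (update β i n) = ((n : ℝ) + 1) * ∏ j ∈ univ.erase i, ((β j : ℝ) + 1) := by
  unfold hW
  rw [← Finset.mul_prod_erase univ _ (mem_univ i), update_self]
  congr 1
  refine Finset.prod_congr rfl fun j hj => ?_
  rw [update_of_ne (Finset.ne_of_mem_erase hj)]

lemma hW_split {d : ℕ} (β : Fin d → ℕ) (i : Fin d) :
    hW β = ((β i : ℝ) + 1) * ∏ j ∈ univ.erase i, ((β j : ℝ) + 1) := by
  conv_lhs => rw [← update_eq_self i β]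
  exact hW_update β i _

lemma hW_erase_ge {d : ℕ} (β : Fin d → ℕ) (i : Fin d) :
    1 ≤ ∏ j ∈ univ.erase i, ((β j : ℝ) + 1) :=
  Finset.one_le_prod fun j _ => by simp

lemma hW_hup {d : ℕ} (β : Fin d → ℕ) (i : Fin d) : hW (hup β i) ≤ 2 * hW β := by
  rw [hup, hW_update, hW_split β i, ← mul_assoc]
  have := hW_erase_ge β i
  have h2 : (0 : ℝ) ≤ β i := by positivity
  push_cast
  gcongr
  linarith

lemma hW_hdn {d : ℕ} (β : Fin d → ℕ) (i : Fin d) : hW (hdn β i) ≤ 2 * hW β := by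
  rw [hdn, hW_update, hW_split β i, ← mul_assoc]
  have := hW_erase_ge β i
  have h2 : (0 : ℝ) ≤ β i := by positivity
  have h3 : ((β i - 1 : ℕ) : ℝ) ≤ β i := by exact_mod_cast Nat.sub_le _ _
  gcongr
  linarith

lemma sqrt_le_hW {d : ℕ} (β : Fin d → ℕ) (i : Fin d) : Real.sqrt (β i + 1) ≤ hW β := by
  have h1 : (β i : ℝ) + 1 ≤ hW β := by
    rw [hW_split β i]
    exact le_mul_of_one_le_right (by positivity) (hW_erase_ge β i)
  refine le_trans ?_ h1
  rw [Real.sqrt_le_left (by positivity)]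
  have h2 : (0 : ℝ) ≤ β i := by positivity
  nlinarith

lemma sqrt_le_hW' {d : ℕ} (β : Fin d → ℕ) (i : Fin d) : Real.sqrt (β i) ≤ hW β :=
  (Real.sqrt_le_sqrt (by linarith)).trans (sqrt_le_hW β i)

lemma summable_hW (d : ℕ) : Summable (fun β : Fin d → ℕ => (hW β ^ 2)⁻¹) := by
  have hs : Summable (fun n : ℕ => (((n : ℝ) + 1) ^ 2)⁻¹) := by
    have := (summable_nat_add_iff 1).2 (Real.summable_nat_pow_inv (p := 2) |>.2 (by norm_num))
    simpa using this
  refine summable_of_sum_le (c := (∑' n : ℕ, (((n : ℝ) + 1) ^ 2)⁻¹) ^ d)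
    (fun β => by positivity) fun u => ?_
  classical
  obtain ⟨N, hN⟩ : ∃ N : ℕ, ∀ β ∈ u, ∀ i, β i < N := by
    refine ⟨(u.sup fun β => univ.sup β) + 1, fun β hβ i => Nat.lt_succ_of_le ?_⟩
    exact (Finset.le_sup (f := β) (mem_univ i)).trans (Finset.le_sup (f := fun β => univ.sup β) hβ)
  have hsub : u ⊆ Fintype.piFinset fun _ : Fin d => range N := by
    intro β hβ
    rw [Fintype.mem_piFinset]
    intro i
    exact mem_range.2 (hN β hβ i)
  calc ∑ β ∈ u, (hW β ^ 2)⁻¹ ≤ ∑ β ∈ Fintype.piFinset fun _ : Fin d => range N, (hW β ^ 2)⁻¹ :=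
        Finset.sum_le_sum_of_subset_of_nonneg hsub fun _ _ _ => by positivity
    _ = ∏ i : Fin d, ∑ n ∈ range N, (((n : ℝ) + 1) ^ 2)⁻¹ := by
        rw [Finset.prod_univ_sum]
        refine Finset.sum_congr rfl fun β _ => ?_
        rw [hW, ← Finset.prod_pow, ← Finset.prod_inv_distrib]
    _ = (∑ n ∈ range N, (((n : ℝ) + 1) ^ 2)⁻¹) ^ d := by simp
    _ ≤ _ := by
        gcongr
        exact hs.sum_le_tsum _ fun _ _ => by positivity

lemma seminorm_succ_right {d : ℕ} (k l : ℕ) (φ : 𝓢(EuclideanSpace ℝ (Fin d), ℝ)) :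
    SchwartzMap.seminorm ℝ k (l + 1) φ ≤ ∑ i, SchwartzMap.seminorm ℝ k l (Dop i φ) := by
  refine SchwartzMap.seminorm_le_bound ℝ k (l + 1) φ
    (Finset.sum_nonneg fun i _ => apply_nonneg _ _) fun x => ?_
  let L : Fin d → ℝ →L[ℝ] (EuclideanSpace ℝ (Fin d) →L[ℝ] ℝ) := fun i =>
    ContinuousLinearMap.toSpanSingleton ℝ (EuclideanSpace.proj (𝕜 := ℝ) i)
  have hL : ∀ i, ‖L i‖ ≤ 1 := by
    intro i
    simp only [L, ContinuousLinearMap.norm_toSpanSingleton]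
    refine ContinuousLinearMap.opNorm_le_bound _ zero_le_one fun y => ?_
    rw [one_mul]
    exact PiLp.norm_apply_le y i
  have hf : fderiv ℝ (φ : EuclideanSpace ℝ (Fin d) → ℝ) = fun y => ∑ i, (L i ∘ Dop i φ) y := by
    funext y
    ext v
    have hv : v = ∑ i, v i • EuclideanSpace.single i (1 : ℝ) := by
      ext j
      simp [Finset.sum_apply, Pi.single_apply]
    conv_lhs => rw [hv]
    rw [map_sum]
    simp only [comp_apply, _root_.sum_apply]
    refine Finset.sum_congr rfl fun i _ => ?_
    rw [map_smul]
    have : Dop i φ y = fderiv ℝ φ y (EuclideanSpace.single i 1) :=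
      SchwartzMap.lineDerivOp_apply_eq_fderiv _ _ _
    rw [this]
    simp [L, mul_comm]
  rw [← norm_iteratedFDeriv_fderiv, hf]
  have hcd : ∀ i, ContDiff ℝ l (L i ∘ Dop i φ) := fun i => (L i).contDiff.comp ((Dop i φ).smooth l)
  rw [iteratedFDeriv_sum (fun i _ => hcd i), Finset.sum_apply]
  calc ‖x‖ ^ k * ‖∑ i, iteratedFDeriv ℝ l (L i ∘ Dop i φ) x‖
      ≤ ‖x‖ ^ k * ∑ i, ‖iteratedFDeriv ℝ l (L i ∘ Dop i φ) x‖ := by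
        gcongr; exact norm_sum_le _ _
    _ = ∑ i, ‖x‖ ^ k * ‖iteratedFDeriv ℝ l (L i ∘ Dop i φ) x‖ := by rw [Finset.mul_sum]
    _ ≤ ∑ i, ‖x‖ ^ k * ‖iteratedFDeriv ℝ l (Dop i φ) x‖ := by
        gcongr with i
        refine ((L i).norm_iteratedFDeriv_comp_left ((Dop i φ).smooth l).contDiffAt le_rfl).trans ?_
        exact mul_le_of_le_one_left (norm_nonneg _) (hL i)
    _ ≤ _ := by
        gcongr with i
        exact SchwartzMap.le_seminorm ℝ k l (Dop i φ) x

lemma seminorm_succ_left {d : ℕ} (k : ℕ) (φ : 𝓢(EuclideanSpace ℝ (Fin d), ℝ)) :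
    SchwartzMap.seminorm ℝ (k + 1) 0 φ ≤ ∑ i, SchwartzMap.seminorm ℝ k 0 (Xop i φ) := by
  refine SchwartzMap.seminorm_le_bound ℝ (k + 1) 0 φ
    (Finset.sum_nonneg fun i _ => apply_nonneg _ _) fun x => ?_
  rw [norm_iteratedFDeriv_zero]
  have hx : ‖x‖ ≤ ∑ i, ‖x i‖ := by
    have hv : x = ∑ i, x i • EuclideanSpace.single i (1 : ℝ) := by
      ext j
      simp [Finset.sum_apply, Pi.single_apply]
    conv_lhs => rw [hv]
    refine (norm_sum_le _ _).trans (Finset.sum_le_sum fun i _ => ?_)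
    rw [norm_smul]; simp
  calc ‖x‖ ^ (k + 1) * ‖φ x‖ = ‖x‖ ^ k * ‖x‖ * ‖φ x‖ := by rw [pow_succ]
    _ ≤ ‖x‖ ^ k * (∑ i, ‖x i‖) * ‖φ x‖ := by gcongr
    _ = ∑ i, ‖x‖ ^ k * ‖Xop i φ x‖ := by
        rw [Finset.mul_sum, Finset.sum_mul]
        refine Finset.sum_congr rfl fun i _ => ?_
        rw [Xop_apply, norm_mul]; ring
    _ ≤ _ := by
        gcongr with i
        exact SchwartzMap.norm_pow_mul_le_seminorm ℝ (Xop i φ) k x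

variable {d : ℕ} (h : (Fin d → ℕ) → 𝓢(EuclideanSpace ℝ (Fin d), ℝ))

lemma comb_bound (q : Seminorm ℝ 𝓢(EuclideanSpace ℝ (Fin d), ℝ)) {C : ℝ} {m : ℕ} (hC : 0 ≤ C)
    (hq : ∀ β, q (h β) ≤ C * hW β ^ m) (β : Fin d → ℕ) (i : Fin d) (a b : ℝ)
    (ha : |a| ≤ hW β) (hb : |b| ≤ hW β) :
    q (a • h (hup β i) + b • h (hdn β i)) ≤ (2 * C * 2 ^ m) * hW β ^ (m + 1) := by
  have hw := hW_pos β
  have h1 : q (h (hup β i)) ≤ C * (2 * hW β) ^ m :=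
    (hq _).trans (by gcongr; exacts [(hW_pos _).le, hW_hup β i])
  have h2 : q (h (hdn β i)) ≤ C * (2 * hW β) ^ m :=
    (hq _).trans (by gcongr; exacts [(hW_pos _).le, hW_hdn β i])
  refine (map_add_le_add q _ _).trans ?_
  rw [map_smul_eq_mul, map_smul_eq_mul, Real.norm_eq_abs, Real.norm_eq_abs]
  calc |a| * q (h (hup β i)) + |b| * q (h (hdn β i))
      ≤ hW β * (C * (2 * hW β) ^ m) + hW β * (C * (2 * hW β) ^ m) := by
        gcongr
    _ = _ := by rw [mul_pow]; ring

variable (hh : ∀ β x, h β x = hermiteFunMulti d β x)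
include hh

lemma h_sup_bound : ∃ K : ℝ, 0 ≤ K ∧ ∀ β x, ‖h β x‖ ≤ K * hW β := by
  obtain ⟨K, hK, hb⟩ := hermiteFun_bound
  refine ⟨K ^ d, by positivity, fun β x => ?_⟩
  rw [hh, hermiteFunMulti, norm_prod]
  calc ∏ i, ‖hermiteFun (β i) (x i)‖ ≤ ∏ i, (K * (β i + 1)) :=
        Finset.prod_le_prod (fun _ _ => norm_nonneg _) fun i _ => hb _ _
    _ = K ^ d * hW β := by rw [Finset.prod_mul_distrib]; simp [hW]

lemma h_seminorm_bound_zero (k : ℕ) : ∃ C : ℝ, 0 ≤ C ∧ ∃ m : ℕ,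
    ∀ β, SchwartzMap.seminorm ℝ k 0 (h β) ≤ C * hW β ^ m := by
  induction k with
  | zero =>
    obtain ⟨K, hK, hb⟩ := h_sup_bound h hh
    refine ⟨K, hK, 1, fun β => ?_⟩
    refine SchwartzMap.seminorm_le_bound ℝ 0 0 (h β) (by have := hW_pos β; positivity) fun x => ?_
    rw [norm_iteratedFDeriv_zero]
    simpa using hb β x
  | succ k ih =>
    obtain ⟨C, hC, m, hb⟩ := ih
    refine ⟨d * (2 * C * 2 ^ m), by positivity, m + 1, fun β => ?_⟩
    refine (seminorm_succ_left k (h β)).trans ?_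
    have : ∀ i : Fin d, SchwartzMap.seminorm ℝ k 0 (Xop i (h β))
        ≤ (2 * C * 2 ^ m) * hW β ^ (m + 1) := by
      intro i
      rw [Xop_h h hh]
      apply comb_bound h _ hC hb
      · rw [abs_of_nonneg (by positivity)]; exact sqrt_le_hW β i
      · rw [abs_of_nonneg (by positivity)]; exact sqrt_le_hW' β i
    refine (Finset.sum_le_sum fun i _ => this i).trans ?_
    simp [mul_assoc]

lemma h_seminorm_bound (k l : ℕ) : ∃ C : ℝ, 0 ≤ C ∧ ∃ m : ℕ,
    ∀ β, SchwartzMap.seminorm ℝ k l (h β) ≤ C * hW β ^ m := by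
  induction l with
  | zero => exact h_seminorm_bound_zero h hh k
  | succ l ih =>
    obtain ⟨C, hC, m, hb⟩ := ih
    refine ⟨d * (2 * C * 2 ^ m), by positivity, m + 1, fun β => ?_⟩
    refine (seminorm_succ_right k l (h β)).trans ?_
    have : ∀ i : Fin d, SchwartzMap.seminorm ℝ k l (Dop i (h β))
        ≤ (2 * C * 2 ^ m) * hW β ^ (m + 1) := by
      intro i
      have e : Dop i (h β) = (-(1 / 2 * Real.sqrt (β i + 1))) • h (hup β i) +
          (1 / 2 * Real.sqrt (β i)) • h (hdn β i) := by
        rw [Dop_h h hh]; module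
      have w := hW_pos β
      have h1 := sqrt_le_hW β i
      have h2 := sqrt_le_hW' β i
      rw [e]
      apply comb_bound h _ hC hb
      · rw [abs_neg, abs_of_nonneg (by positivity)]; linarith
      · rw [abs_of_nonneg (by positivity)]; linarith
    refine (Finset.sum_le_sum fun i _ => this i).trans ?_
    simp [mul_assoc]

lemma exists_weighted (φ : 𝓢(EuclideanSpace ℝ (Fin d), ℝ)) :
    ∃ ψ : 𝓢(EuclideanSpace ℝ (Fin d), ℝ), ∀ β, hco h ψ β = hW β * hco h φ β := by
  have : ∀ s : Finset (Fin d), ∃ ψ : 𝓢(EuclideanSpace ℝ (Fin d), ℝ),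
      ∀ β, hco h ψ β = (∏ i ∈ s, ((β i : ℝ) + 1)) * hco h φ β := by
    intro s
    induction s using Finset.induction_on with
    | empty => exact ⟨φ, fun β => by simp⟩
    | insert i s hi ih =>
      obtain ⟨ψ, hψ⟩ := ih
      refine ⟨Am i (Ap i ψ), fun β => ?_⟩
      rw [hco_AmAp h hh, hψ, Finset.prod_insert hi]; ring
  exact this univ

lemma hco_bound (m : ℕ) (φ : 𝓢(EuclideanSpace ℝ (Fin d), ℝ)) :
    ∃ C : ℝ, 0 ≤ C ∧ ∀ β, |hco h φ β| * hW β ^ m ≤ C * hW β := by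
  induction m generalizing φ with
  | zero =>
    obtain ⟨K, hK, hb⟩ := h_sup_bound h hh
    refine ⟨(∫ x, ‖φ x‖) * K, mul_nonneg (integral_nonneg fun _ => norm_nonneg _) hK, fun β => ?_⟩
    rw [pow_zero, mul_one, ← Real.norm_eq_abs, hco, mul_assoc, ← integral_mul_const]
    refine norm_integral_le_of_norm_le (φ.integrable.norm.mul_const _)
      (Filter.Eventually.of_forall fun x => ?_)
    rw [norm_mul]
    gcongr
    exact hb β x
  | succ m ih =>
    obtain ⟨ψ, hψ⟩ := exists_weighted h hh φ
    obtain ⟨C, hC, hb⟩ := ih ψ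
    refine ⟨C, hC, fun β => ?_⟩
    refine le_trans (le_of_eq ?_) (hb β)
    rw [hψ, abs_mul, abs_of_pos (hW_pos β)]; ring

lemma summable_seminorm (k l : ℕ) (φ : 𝓢(EuclideanSpace ℝ (Fin d), ℝ)) :
    Summable (fun β => |hco h φ β| * SchwartzMap.seminorm ℝ k l (h β)) := by
  obtain ⟨C, hC, m, hb⟩ := h_seminorm_bound h hh k l
  obtain ⟨D, hD, hb2⟩ := hco_bound h hh (m + 3) φ
  refine Summable.of_nonneg_of_le (fun β => mul_nonneg (abs_nonneg _) (apply_nonneg _ _))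
    (fun β => ?_) ((summable_hW d).mul_left (C * D))
  have w := hW_pos β
  calc |hco h φ β| * SchwartzMap.seminorm ℝ k l (h β) ≤ |hco h φ β| * (C * hW β ^ m) := by
        gcongr; exact hb β
    _ = C * (|hco h φ β| * hW β ^ (m + 3)) * (hW β ^ 3)⁻¹ := by
        rw [pow_add]; field_simp
    _ ≤ C * (D * hW β) * (hW β ^ 3)⁻¹ := by gcongr C * ?_ * _; exact hb2 β
    _ = C * D * (hW β ^ 2)⁻¹ := by field_simp

end Bounds

section Completeness
open scoped SchwartzMap LineDeriv FourierTransform RealInnerProductSpace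
open Function Finset

lemma bdd_mul_schwartz_integrable {d : ℕ} (f : EuclideanSpace ℝ (Fin d) → ℝ) (hf : Continuous f)
    (B : ℝ) (hB : ∀ x, ‖f x‖ ≤ B) (ψ : 𝓢(EuclideanSpace ℝ (Fin d), ℝ)) :
    Integrable (fun x => f x * ψ x) :=
  ψ.integrable.bdd_mul hf.aestronglyMeasurable (Filter.Eventually.of_forall hB)

/-- multiplication by the linear form given by `w` -/
noncomputable def Mop {d : ℕ} (w : EuclideanSpace ℝ (Fin d)) :
    𝓢(EuclideanSpace ℝ (Fin d), ℝ) →ₗ[ℝ] 𝓢(EuclideanSpace ℝ (Fin d), ℝ) :=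
  ∑ i, w i • (Xop i).toLinearMap

lemma Mop_apply {d : ℕ} (w : EuclideanSpace ℝ (Fin d)) (φ : 𝓢(EuclideanSpace ℝ (Fin d), ℝ)) :
    Mop w φ = ∑ i, w i • Xop i φ := by
  simp [Mop]

lemma schwartz_sum_apply {d : ℕ} {ι : Type*} (s : Finset ι)
    (f : ι → 𝓢(EuclideanSpace ℝ (Fin d), ℝ)) (x : EuclideanSpace ℝ (Fin d)) :
    (∑ i ∈ s, f i) x = ∑ i ∈ s, f i x := by
  classical
  induction s using Finset.induction_on with
  | empty => simp
  | insert a s ha ih => rw [Finset.sum_insert ha, Finset.sum_insert ha, ← ih]; rfl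

lemma Mop_pow_apply {d : ℕ} (w : EuclideanSpace ℝ (Fin d)) (n : ℕ)
    (φ : 𝓢(EuclideanSpace ℝ (Fin d), ℝ)) (x : EuclideanSpace ℝ (Fin d)) :
    (Mop w ^ n) φ x = (inner ℝ x w) ^ n * φ x := by
  induction n generalizing φ with
  | zero => simp
  | succ n ih =>
    rw [pow_succ, Module.End.mul_apply, ih, Mop_apply, schwartz_sum_apply, pow_succ, mul_assoc]
    congr 1
    rw [PiLp.inner_apply, Finset.sum_mul]
    refine Finset.sum_congr rfl fun i _ => ?_
    simp [Xop_apply]; ring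

variable {d : ℕ} (h : (Fin d → ℕ) → 𝓢(EuclideanSpace ℝ (Fin d), ℝ))
variable (hh : ∀ β x, h β x = hermiteFunMulti d β x)
include hh

lemma moments_zero (f : EuclideanSpace ℝ (Fin d) → ℝ) (hf : Continuous f)
    (B : ℝ) (hB : ∀ x, ‖f x‖ ≤ B) (h0 : ∀ β, ∫ x, f x * h β x = 0)
    (w : EuclideanSpace ℝ (Fin d)) (n : ℕ) (β : Fin d → ℕ) :
    ∫ x, f x * ((inner ℝ x w) ^ n * h β x) = 0 := by
  let P : 𝓢(EuclideanSpace ℝ (Fin d), ℝ) →ₗ[ℝ] ℝ :=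
    { toFun := fun ψ => ∫ x, f x * ψ x
      map_add' := by
        intro φ ψ
        rw [← integral_add (bdd_mul_schwartz_integrable f hf B hB _)
          (bdd_mul_schwartz_integrable f hf B hB _)]
        refine integral_congr_ae (Filter.Eventually.of_forall fun x => ?_)
        simp; ring
      map_smul' := by
        intro a φ
        rw [RingHom.id_apply, smul_eq_mul, ← integral_const_mul]
        refine integral_congr_ae (Filter.Eventually.of_forall fun x => ?_)
        simp; ring }
  have key : ∀ n β, P ((Mop w ^ n) (h β)) = 0 := by
    intro n
    induction n with
    | zero => intro β; exact h0 β
    | succ n ih =>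
      intro β
      rw [pow_succ, Module.End.mul_apply, Mop_apply]
      simp only [Xop_h h hh, map_sum, map_smul, map_add, ih]
      simp
  have := key n β
  simp only [P, LinearMap.coe_mk, AddHom.coe_mk, Mop_pow_apply] at this
  exact this

lemma h_zero_pos (x : EuclideanSpace ℝ (Fin d)) : 0 < h 0 x := by
  rw [h_zero h hh]
  have : 0 < hcst 0 := by unfold hcst; positivity
  positivity

lemma integrable_exp_h_zero (w : EuclideanSpace ℝ (Fin d)) :
    Integrable (fun x => Real.exp |2 * Real.pi * inner ℝ x w| * h 0 x) := by
  have h1 : Integrable (fun x : EuclideanSpace ℝ (Fin d) => Real.exp (-(1 / 8) * ‖x‖ ^ 2)) := by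
    have := GaussianFourier.integrable_cexp_neg_mul_sq_norm_add (b := 1 / 8) (by norm_num) 0
      (0 : EuclideanSpace ℝ (Fin d))
    have := this.norm
    refine this.congr (Filter.Eventually.of_forall fun x => ?_)
    simp only [Complex.norm_exp]
    congr 1
    have : (-(1 / 8 : ℂ) * (‖x‖ : ℂ) ^ 2 + 0 * ((inner ℝ 0 x : ℝ) : ℂ))
      = ((-(1 / 8) * ‖x‖ ^ 2 : ℝ) : ℂ) := by push_cast; ring
    rw [this, Complex.ofReal_re]
  set c := 2 * Real.pi * ‖w‖ with hc
  have h2 := h1.const_mul (hcst 0 ^ d * Real.exp (2 * c ^ 2))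
  refine h2.mono' ?_ (Filter.Eventually.of_forall fun x => ?_)
  · apply Continuous.aestronglyMeasurable
    have := (h 0).continuous
    fun_prop
  · have hp := h_zero_pos h hh x
    rw [Real.norm_eq_abs, abs_of_nonneg (by positivity), h_zero h hh]
    have hk : 0 < hcst 0 := by unfold hcst; positivity
    have e1 : |2 * Real.pi * inner ℝ x w| ≤ c * ‖x‖ := by
      rw [abs_mul, abs_of_pos (by positivity), hc]
      have := abs_real_inner_le_norm x w
      have hpi := Real.pi_pos
      calc 2 * Real.pi * |inner ℝ x w| ≤ 2 * Real.pi * (‖x‖ * ‖w‖) := by gcongr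
        _ = _ := by ring
    have e2 : c * ‖x‖ + (-(1 / 4) * ‖x‖ ^ 2) ≤ 2 * c ^ 2 + (-(1 / 8) * ‖x‖ ^ 2) := by
      nlinarith [sq_nonneg (‖x‖ - 4 * c)]
    calc Real.exp |2 * Real.pi * inner ℝ x w| * (hcst 0 ^ d * Real.exp (-(1 / 4) * ‖x‖ ^ 2))
        ≤ Real.exp (c * ‖x‖) * (hcst 0 ^ d * Real.exp (-(1 / 4) * ‖x‖ ^ 2)) := by gcongr
      _ = hcst 0 ^ d * Real.exp (c * ‖x‖ + (-(1 / 4) * ‖x‖ ^ 2)) := by rw [Real.exp_add]; ring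
      _ ≤ hcst 0 ^ d * Real.exp (2 * c ^ 2 + (-(1 / 8) * ‖x‖ ^ 2)) := by gcongr
      _ = _ := by rw [Real.exp_add]; ring

lemma hermite_complete (f : EuclideanSpace ℝ (Fin d) → ℝ) (hf : Continuous f)
    (B : ℝ) (hB : ∀ x, ‖f x‖ ≤ B) (h0 : ∀ β, ∫ x, f x * h β x = 0)
    (x : EuclideanSpace ℝ (Fin d)) : f x = 0 := by
  let g : EuclideanSpace ℝ (Fin d) → ℂ := fun x => ((f x * h 0 x : ℝ) : ℂ)
  have hgi : Integrable g := (bdd_mul_schwartz_integrable f hf B hB (h 0)).ofReal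
  have hgc : Continuous g := Complex.continuous_ofReal.comp (hf.mul (h 0).continuous)
  have hF : 𝓕 g = 0 := by
    funext w
    rw [Real.fourier_eq', Pi.zero_apply]
    let F : ℕ → EuclideanSpace ℝ (Fin d) → ℂ := fun n v =>
      (((-2 * Real.pi * inner ℝ v w : ℝ) : ℂ) * Complex.I) ^ n / (n.factorial : ℂ) * g v
    have hs := hasSum_integral_of_dominated_convergence (μ := volume) (F := F)
      (f := fun v => Complex.exp (((-2 * Real.pi * inner ℝ v w : ℝ) : ℂ) * Complex.I) • g v)
      (fun n v => |2 * Real.pi * inner ℝ v w| ^ n / n.factorial * (B * h 0 v))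
      ?_ ?_ ?_ ?_ ?_
    · have hz : ∀ n, ∫ v, F n v = 0 := by
        intro n
        have e : ∀ v, F n v = ((-2 * Real.pi : ℝ) * Complex.I) ^ n / (n.factorial : ℂ) *
            ((f v * ((inner ℝ v w) ^ n * h 0 v) : ℝ) : ℂ) := by
          intro v
          simp only [F, g]
          push_cast
          ring
        simp_rw [e]
        rw [integral_const_mul, integral_complex_ofReal, moments_zero h hh f hf B hB h0]
        simp
      simp_rw [hz] at hs
      exact hs.unique hasSum_zero
    · intro n
      apply Continuous.aestronglyMeasurable
      simp only [F]
      fun_prop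
    · intro n
      refine Filter.Eventually.of_forall fun v => ?_
      simp only [F, g, norm_mul, norm_div, norm_pow, Complex.norm_real, Complex.norm_I, mul_one,
        Complex.norm_natCast]
      have hp := h_zero_pos h hh v
      have e : ‖(-2 : ℝ)‖ * ‖Real.pi‖ * ‖inner ℝ v w‖ = |2 * Real.pi * inner ℝ v w| := by
        simp [abs_mul]
      rw [e, Real.norm_eq_abs (h 0 v), abs_of_pos hp]
      gcongr
      exact hB v
    · refine Filter.Eventually.of_forall fun v => ?_
      exact (Real.summable_pow_div_factorial _).mul_right _
    · have e : ∀ v, ∑' n : ℕ, |2 * Real.pi * inner ℝ v w| ^ n / n.factorial * (B * h 0 v) =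
          B * (Real.exp |2 * Real.pi * inner ℝ v w| * h 0 v) := by
        intro v
        rw [tsum_mul_right, Real.exp_eq_exp_ℝ, NormedSpace.exp_eq_tsum_div]
        ring
      simp_rw [e]
      exact (integrable_exp_h_zero h hh w).const_mul B
    · refine Filter.Eventually.of_forall fun v => ?_
      rw [smul_eq_mul]
      refine HasSum.mul_right _ ?_
      rw [Complex.exp_eq_exp_ℂ]
      exact NormedSpace.expSeries_div_hasSum_exp _
  have hinv := hgc.fourierInv_fourier_eq hgi (by rw [hF]; exact integrable_zero _ _ _)
  have hgx : g x = 0 := by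
    rw [← hinv, hF, Real.fourierInv_eq]
    simp
  have hp := h_zero_pos h hh x
  have : f x * h 0 x = 0 := Complex.ofReal_eq_zero.1 hgx
  exact (mul_eq_zero.1 this).resolve_right hp.ne'

end Completeness

section Expansion
open scoped SchwartzMap
open Function Finset

lemma seminorm_le_tsum {d : ℕ} {ι : Type*} (u : ι → 𝓢(EuclideanSpace ℝ (Fin d), ℝ))
    (ψ : 𝓢(EuclideanSpace ℝ (Fin d), ℝ)) (hψ : ∀ x, ψ x = ∑' i, u i x)
    (hs : ∀ k l, Summable (fun i => SchwartzMap.seminorm ℝ k l (u i))) (k l : ℕ) :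
    SchwartzMap.seminorm ℝ k l ψ ≤ ∑' i, SchwartzMap.seminorm ℝ k l (u i) := by
  refine SchwartzMap.seminorm_le_bound ℝ k l ψ (tsum_nonneg fun i => apply_nonneg _ _) fun x => ?_
  have e : (ψ : EuclideanSpace ℝ (Fin d) → ℝ) = fun y => ∑' i, u i y := funext hψ
  have hsum : Summable (fun i => ‖iteratedFDeriv ℝ l (u i) x‖) :=
    Summable.of_nonneg_of_le (fun i => norm_nonneg _)
      (fun i => SchwartzMap.norm_iteratedFDeriv_le_seminorm ℝ (u i) l x) (hs 0 l)
  rw [e, iteratedFDeriv_tsum_apply (N := ⊤) (f := fun i y => u i y)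
    (v := fun n i => SchwartzMap.seminorm ℝ 0 n (u i))
    (fun i => (u i).smooth ⊤) (fun n _ => hs 0 n)
    (fun n i y _ => SchwartzMap.norm_iteratedFDeriv_le_seminorm ℝ (u i) n y) le_top x]
  calc ‖x‖ ^ k * ‖∑' i, iteratedFDeriv ℝ l (u i) x‖
      ≤ ‖x‖ ^ k * ∑' i, ‖iteratedFDeriv ℝ l (u i) x‖ := by
        gcongr; exact norm_tsum_le_tsum_norm hsum
    _ = ∑' i, ‖x‖ ^ k * ‖iteratedFDeriv ℝ l (u i) x‖ := tsum_mul_left.symm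
    _ ≤ _ := (hsum.mul_left _).tsum_le_tsum (fun i => SchwartzMap.le_seminorm ℝ k l (u i) x)
        (hs k l)

lemma hasSum_schwartz {d : ℕ} {ι : Type*} (u : ι → 𝓢(EuclideanSpace ℝ (Fin d), ℝ))
    (ψ : 𝓢(EuclideanSpace ℝ (Fin d), ℝ)) (hψ : ∀ x, ψ x = ∑' i, u i x)
    (hs : ∀ k l, Summable (fun i => SchwartzMap.seminorm ℝ k l (u i))) :
    HasSum u ψ := by
  rw [HasSum, SummationFilter.unconditional_filter]
  rw [(schwartz_withSeminorms ℝ (EuclideanSpace ℝ (Fin d)) ℝ).tendsto_nhds]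
  rintro ⟨k, l⟩ ε hε
  have ht := tendsto_tsum_compl_atTop_zero (fun i => SchwartzMap.seminorm ℝ k l (u i))
  filter_upwards [ht.eventually_lt_const hε] with F hF
  refine lt_of_le_of_lt ?_ hF
  change SchwartzMap.seminorm ℝ k l (∑ i ∈ F, u i - ψ) ≤ _
  rw [map_sub_rev]
  refine seminorm_le_tsum (fun i : { i // i ∉ F } => u i) _ (fun x => ?_)
    (fun k l => (hs k l).subtype _) k l
  have hsx : Summable (fun i => u i x) :=
    Summable.of_norm_bounded (hs 0 0) fun i => SchwartzMap.norm_le_seminorm ℝ (u i) x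
  have := hsx.sum_add_tsum_subtype_compl F
  rw [SchwartzMap.sub_apply, schwartz_sum_apply, hψ x, ← this]
  ring

lemma hermite_pointwise {d : ℕ} (h : (Fin d → ℕ) → 𝓢(EuclideanSpace ℝ (Fin d), ℝ))
    (hh : ∀ β x, h β x = hermiteFunMulti d β x) (φ : 𝓢(EuclideanSpace ℝ (Fin d), ℝ))
    (x : EuclideanSpace ℝ (Fin d)) : φ x = ∑' β, hco h φ β * h β x := by
  have hv := summable_seminorm h hh 0 0 φ
  have hb : ∀ β y, ‖hco h φ β * h β y‖ ≤ |hco h φ β| * SchwartzMap.seminorm ℝ 0 0 (h β) := by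
    intro β y
    rw [norm_mul, Real.norm_eq_abs (hco h φ β)]
    gcongr
    exact SchwartzMap.norm_le_seminorm ℝ (h β) y
  have hSc : Continuous (fun y => ∑' β, hco h φ β * h β y) :=
    continuous_tsum (fun β => continuous_const.mul (h β).continuous) hv hb
  have hSb : ∀ y, ‖∑' β, hco h φ β * h β y‖ ≤
      ∑' β, |hco h φ β| * SchwartzMap.seminorm ℝ 0 0 (h β) := fun y =>
    tsum_of_norm_bounded hv.hasSum fun β => hb β y
  have key := hermite_complete h hh (fun y => φ y - ∑' β, hco h φ β * h β y)
    (φ.continuous.sub hSc)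
    (SchwartzMap.seminorm ℝ 0 0 φ + ∑' β, |hco h φ β| * SchwartzMap.seminorm ℝ 0 0 (h β))
    (fun y => (norm_sub_le _ _).trans
      (add_le_add (SchwartzMap.norm_le_seminorm ℝ φ y) (hSb y))) ?_ x
  · exact sub_eq_zero.1 key
  · intro β
    have hi2 := bdd_mul_schwartz_integrable _ hSc _ hSb (h β)
    have hs := hasSum_integral_of_summable_integral_norm (μ := volume)
      (F := fun α y => hco h φ α * h α y * h β y)
      (fun α => by
        refine ((schwartz_mul_integrable (h α) (h β)).const_mul (hco h φ α)).congr
          (Filter.Eventually.of_forall fun y => ?_)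
        simp only; ring)
      (by
        refine Summable.of_nonneg_of_le (fun α => integral_nonneg fun y => norm_nonneg _)
          (fun α => ?_) (hv.mul_right (∫ y, ‖h β y‖))
        rw [← integral_const_mul]
        refine integral_mono_of_nonneg (Filter.Eventually.of_forall fun y => norm_nonneg _)
          ((h β).integrable.norm.const_mul _) (Filter.Eventually.of_forall fun y => ?_)
        simp only
        rw [norm_mul]
        gcongr
        exact hb α y)
    have e1 : ∀ α, ∫ y, hco h φ α * h α y * h β y = hco h φ α * hco h (h α) β := by
      intro α
      rw [hco.eq_def h (h α), ← integral_const_mul]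
      refine integral_congr_ae (Filter.Eventually.of_forall fun y => ?_)
      simp only; ring
    simp_rw [e1] at hs
    have hs2 : HasSum (fun α => hco h φ α * hco h (h α) β) (hco h φ β) := by
      have := hasSum_single (f := fun α => hco h φ α * hco h (h α) β) β
        (fun α hα => by rw [hco_h_ne h hh α β hα, mul_zero])
      simpa [hco_h_self h hh β] using this
    have e2 := hs.unique hs2
    simp_rw [tsum_mul_right] at e2
    simp_rw [sub_mul]
    rw [integral_sub (schwartz_mul_integrable φ (h β)) hi2, e2]
    exact sub_self _

end Expansion

/-- For a tempered distribution `T` and Schwartz `φ`, the family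
`T(h_β)·∫ φ h_β` is absolutely summable with sum `T(φ)`. -/
theorem tempered_distribution_hermite_expansion (d : ℕ)
    (h : (Fin d → ℕ) → SchwartzMap (EuclideanSpace ℝ (Fin d)) ℝ)
    (hh : ∀ β x, h β x = hermiteFunMulti d β x)
    (T : SchwartzMap (EuclideanSpace ℝ (Fin d)) ℝ →L[ℝ] ℝ)
    (φ : SchwartzMap (EuclideanSpace ℝ (Fin d)) ℝ) :
    Summable (fun β : Fin d → ℕ => |T (h β) * hermCoeff d (fun z => φ z) β|) ∧
    ∑' β : Fin d → ℕ, T (h β) * hermCoeff d (fun z => φ z) β = T φ := by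
  have hc : ∀ β, hermCoeff d (fun z => φ z) β = hco h φ β := by
    intro β
    simp only [hermCoeff, hco, hh]
  have hs : HasSum (fun β => hco h φ β • h β) φ := by
    refine hasSum_schwartz _ φ (fun x => ?_) (fun k l => ?_)
    · exact hermite_pointwise h hh φ x
    · refine (summable_seminorm h hh k l φ).congr fun β => ?_
      rw [map_smul_eq_mul, Real.norm_eq_abs]
  have hT := T.hasSum hs
  have hT2 : HasSum (fun β => T (h β) * hermCoeff d (fun z => φ z) β) (T φ) := by
    refine hT.congr_fun fun β => ?_
    rw [map_smul, smul_eq_mul, hc, mul_comm]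
  exact ⟨hT2.summable.abs, hT2.tsum_eq⟩
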